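/- Let t ≥ 1 and, for each i ∈ {1, …, t}, let D_i be an oriented cycle on ZMod k_i with k_i ≥ 3. The direct product D₁ × ⋯ × D_t is an ECD digraph if and only if at most one of the digraphs D₁, …, D_t has a source, and moreover: (i) if no D_i has a source, then at least one of the numbers k₁, …, k_t is even; (ii) if D_{i₀} is the unique factor having a source, then every sink of D_{i₀} has a neighboring source at even distance. -/

import Mathlib

/-- The closed out-neighborhood of `v` in the digraph with arc relation `A`. -/
def closedOut {V : Type*} (A : V → V → Prop) (v : V) : Set V := {v} ∪ {u | A v u}

/-- `S` is an efficient closed dominating (ECD) set: the closed out-neighborhoods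
centered in vertices of `S` are pairwise disjoint and cover the whole vertex set. -/
def IsECD {V : Type*} (A : V → V → Prop) (S : Set V) : Prop :=
  (∀ v ∈ S, ∀ w ∈ S, v ≠ w → closedOut A v ∩ closedOut A w = ∅) ∧
  (⋃ v ∈ S, closedOut A v) = Set.univ

/-- A digraph is an ECD digraph if it admits an ECD set. -/
def IsECDDigraph {V : Type*} (A : V → V → Prop) : Prop := ∃ S, IsECD A S

/-- A sink: a vertex of out-degree 0. -/
def IsSink {V : Type*} (A : V → V → Prop) (s : V) : Prop := ∀ y, ¬ A s y

/-- A source: a vertex of in-degree 0. -/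
def IsSource {V : Type*} (A : V → V → Prop) (s : V) : Prop := ∀ x, ¬ A x s

/-- An oriented cycle on `ZMod k`: for each `i`, exactly one of the arcs `(i, i+1)` and
`(i+1, i)` is present, and there are no other arcs. -/
def IsOrientedCycle {k : ℕ} (A : ZMod k → ZMod k → Prop) : Prop :=
  (∀ x y, A x y → y = x + 1 ∨ x = y + 1) ∧
  (∀ i : ZMod k, Xor' (A i (i + 1)) (A (i + 1) i))

/-- The sink `s` has a neighboring source at even distance: there is a directed path of
even length `n ≥ 2` from a source to `s` whose inner vertices are not sinks. -/
def HasNearSourceEvenDist {k : ℕ} (A : ZMod k → ZMod k → Prop) (s : ZMod k) : Prop :=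
  ∃ n : ℕ, Even n ∧ 2 ≤ n ∧ ∃ x : ℕ → ZMod k,
    IsSource A (x 0) ∧ x n = s ∧ (∀ j, j < n → A (x j) (x (j + 1))) ∧
    (∀ j, 0 < j → j < n → ¬ IsSink A (x j))

/-!
In an oriented cycle a vertex that is not a sink has at most one in-neighbor, and direct products
inherit this. For irreflexive digraphs, an ECD set is an independent dominating set that never
contains two in-neighbors of one vertex. Membership in an independent dominating set therefore
alternates along every directed walk until a sink is reached: the end of a walk from a source
belongs to the set exactly when the walk has even length.

If two factors had sources, a sink of the second would lift to a vertex of the product with two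
in-neighbors that are sources, hence both in the ECD set. If only `D_i` has a source, walks in
`D_i` lift backwards to the product, since every vertex of every other factor has an in-neighbor;
the two in-neighbors of a sink of `D_i` must then not both be at even distance from a source. If no
factor has a source, the product is the digraph of a translation; membership alternates along its
orbits, so every common multiple of the numbers `k_i` is even.

Conversely, a single factor carries an ECD set (an alternating set on an even directed cycle, or
the independent dominating set defined by recursion along a cycle with a source), and its preimage
is an ECD set of the product because in each other factor every vertex has exactly one in-neighbor.
-/

/-- `S` is an independent dominating set: no arc joins two vertices of `S`, and every vertex
outside `S` has an in-neighbor in `S`. -/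
def IsIndepDominating {V : Type*} (A : V → V → Prop) (S : Set V) : Prop :=
  ∀ y, y ∈ S ↔ ∀ p, A p y → p ∉ S

/-- Every vertex other than a sink has at most one in-neighbor. This is the local property of
oriented cycles that direct products inherit. -/
def NonsinkInUnique {V : Type*} (A : V → V → Prop) : Prop :=
  ∀ ⦃p q y r⦄, A p y → A q y → A y r → p = q

/-- `FromSource A n y`: a directed walk of length `n` leads from some source to `y`. -/
inductive FromSource {V : Type*} (A : V → V → Prop) : ℕ → V → Prop
  | source {s : V} (hs : IsSource A s) : FromSource A 0 s
  | arc {n : ℕ} {p y : V} (hp : FromSource A n p) (hpy : A p y) : FromSource A (n + 1) y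

/-- The arc relation of the direct product of a family of digraphs. -/
abbrev dirProd {ι : Type*} {V : ι → Type*} (A : ∀ i, V i → V i → Prop) :
    (∀ i, V i) → (∀ i, V i) → Prop :=
  fun x y => ∀ i, A i (x i) (y i)

section Digraph

variable {V : Type*} {A : V → V → Prop} {S : Set V}

theorem exists_adj_of_no_source (h : ¬ ∃ s, IsSource A s) (y : V) : ∃ p, A p y :=
  not_forall_not.1 fun hy => h ⟨y, hy⟩

theorem isECD_iff_existsUnique :
    IsECD A S ↔ ∀ u, ∃! v, v ∈ S ∧ u ∈ closedOut A v := by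
  simp only [IsECD, Set.eq_univ_iff_forall, Set.mem_iUnion₂, ← Set.disjoint_iff_inter_eq_empty,
    Set.disjoint_left]
  constructor
  · rintro ⟨hdisj, hcover⟩ u
    obtain ⟨v, hv, huv⟩ := hcover u
    refine ⟨v, ⟨hv, huv⟩, fun w ⟨hw, huw⟩ => ?_⟩
    by_contra hne
    exact hdisj w hw v hv hne huw huv
  · refine fun h => ⟨fun v hv w hw hne u huv huw => ?_, fun u => ?_⟩
    · exact hne ((h u).unique ⟨hv, huv⟩ ⟨hw, huw⟩)
    · obtain ⟨v, ⟨hv, huv⟩, -⟩ := h u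
      exact ⟨v, hv, huv⟩

theorem isECD_iff_isIndepDominating (hA : ∀ v, ¬ A v v) :
    IsECD A S ↔ IsIndepDominating A S ∧
      ∀ ⦃p q y⦄, p ∈ S → q ∈ S → A p y → A q y → p = q := by
  rw [isECD_iff_existsUnique]
  constructor
  · refine fun h => ⟨fun y => ⟨fun hy p hpy hp => ?_, fun hy => ?_⟩, fun p q y hp hq hpy hqy => ?_⟩
    · obtain rfl : p = y := (h y).unique ⟨hp, Or.inr hpy⟩ ⟨hy, Or.inl rfl⟩
      exact hA p hpy
    · obtain ⟨v, ⟨hv, rfl | hvy⟩, -⟩ := h y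
      exacts [hv, absurd hv (hy v hvy)]
    · exact (h y).unique ⟨hp, Or.inr hpy⟩ ⟨hq, Or.inr hqy⟩
  · rintro ⟨hS, huniq⟩ u
    by_cases hu : u ∈ S
    · refine ⟨u, ⟨hu, Or.inl rfl⟩, ?_⟩
      rintro w ⟨hw, rfl | hwu⟩
      exacts [rfl, absurd hw ((hS u).1 hu w hwu)]
    · obtain ⟨p, hpu, hp⟩ : ∃ p, A p u ∧ p ∈ S := by simpa using mt (hS u).2 hu
      refine ⟨p, ⟨hp, Or.inr hpu⟩, ?_⟩
      rintro w ⟨hw, rfl | hwu⟩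
      exacts [absurd hw hu, huniq hw hp hwu hpu]

theorem exists_isIndepDominating_of_wellFounded (hA : WellFounded A) :
    ∃ S, IsIndepDominating A S := by
  refine ⟨{y | hA.fix (C := fun _ => Prop) (fun y mem => ∀ p (hp : A p y), ¬ mem p hp) y},
    fun y => ?_⟩
  simp only [Set.mem_ofPred_eq]
  rw [hA.fix_eq]

theorem exists_fromSource_of_wellFounded (hA : WellFounded A) (y : V) :
    ∃ n, FromSource A n y := by
  induction y using hA.induction with
  | _ y ih =>
    by_cases hy : IsSource A y
    · exact ⟨0, .source hy⟩
    · obtain ⟨p, hpy⟩ := not_forall_not.1 hy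
      obtain ⟨n, hp⟩ := ih p hpy
      exact ⟨n + 1, .arc hp hpy⟩

theorem fromSource_iff_exists_walk {n : ℕ} {y : V} :
    FromSource A n y ↔
      ∃ x : ℕ → V, IsSource A (x 0) ∧ x n = y ∧ ∀ j < n, A (x j) (x (j + 1)) := by
  constructor
  · intro h
    induction h with
    | @source s hs => exact ⟨fun _ => s, hs, rfl, by simp⟩
    | @arc n p y _ hpy ih =>
      obtain ⟨x, hx0, rfl, hx⟩ := ih
      refine ⟨fun j => if j ≤ n then x j else y, by simpa using hx0, by simp, fun j hj => ?_⟩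
      obtain hjn | rfl := Nat.lt_succ_iff_lt_or_eq.1 hj
      · simpa [hjn.le, Nat.succ_le_of_lt hjn] using hx j hjn
      · simpa using hpy
  · rintro ⟨x, hx0, rfl, hx⟩
    have hwalk : ∀ j ≤ n, FromSource A j (x j) := by
      intro j hj
      induction j with
      | zero => exact .source hx0
      | succ j ih => exact .arc (ih (by lia)) (hx j hj)
    exact hwalk n le_rfl

theorem hasNearSourceEvenDist_iff {k : ℕ} {A : ZMod k → ZMod k → Prop} {s : ZMod k} :
    HasNearSourceEvenDist A s ↔ ∃ n p, Odd n ∧ FromSource A n p ∧ A p s := by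
  constructor
  · rintro ⟨n, hn, hn2, x, hx0, rfl, hx, -⟩
    obtain ⟨m, rfl⟩ : ∃ m, n = m + 1 := ⟨n - 1, by lia⟩
    exact ⟨m, x m, by grind, fromSource_iff_exists_walk.2
      ⟨x, hx0, rfl, fun j hj => hx j (by lia)⟩, hx m (by lia)⟩
  · rintro ⟨n, p, hn, hp, hps⟩
    obtain ⟨x, hx0, hxs, hx⟩ := fromSource_iff_exists_walk.1 (hp.arc hps)
    exact ⟨n + 1, hn.add_one, by grind, x, hx0, hxs, hx, fun j _ hj hsink => hsink _ (hx j hj)⟩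

namespace IsIndepDominating

theorem mem_of_isSource (hS : IsIndepDominating A S) {s : V} (hs : IsSource A s) : s ∈ S :=
  (hS s).2 fun p hp => absurd hp (hs p)

theorem mem_iff_notMem (hS : IsIndepDominating A S) (hA : NonsinkInUnique A) {p y r : V}
    (hpy : A p y) (hyr : A y r) : y ∈ S ↔ p ∉ S :=
  ⟨fun hy => (hS y).1 hy p hpy, fun hp => (hS y).2 fun _ hqy => hA hpy hqy hyr ▸ hp⟩

theorem mem_iff_even (hS : IsIndepDominating A S) (hA : NonsinkInUnique A) {n : ℕ} {y r : V}
    (hy : FromSource A n y) (hyr : A y r) : y ∈ S ↔ Even n := by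
  induction hy generalizing r with
  | source hs => simp [hS.mem_of_isSource hs]
  | arc _ hpy ih => rw [hS.mem_iff_notMem hA hpy hyr, ih hpy, Nat.even_add_one]

theorem even_of_nsmul_eq_zero {G : Type*} [AddGroup G] {A : G → G → Prop} {S : Set G}
    (hS : IsIndepDominating A S) (hA : NonsinkInUnique A) {e : G} (he : ∀ x, A (x + e) x)
    {n : ℕ} (hn : n • e = 0) : Even n := by
  have halternate (x : G) : x + e ∈ S ↔ x ∉ S := by
    have hx : A x (x - e) := by simpa using he (x - e)
    rw [hS.mem_iff_notMem hA (he x) hx, not_not]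
  have hmultiple (m : ℕ) : m • e ∈ S ↔ (0 ∈ S ↔ Even m) := by
    induction m with
    | zero => simp
    | succ m ih => rw [succ_nsmul, halternate, ih, Nat.even_add_one]; tauto
  have := hmultiple n
  rw [hn] at this
  tauto

end IsIndepDominating

end Digraph

section DirProd

variable {ι : Type*} {V : ι → Type*} {A : ∀ i, V i → V i → Prop} {i : ι}

theorem nonsinkInUnique_dirProd (hA : ∀ i, NonsinkInUnique (A i)) :
    NonsinkInUnique (dirProd A) :=
  fun _ _ _ _ hpy hqy hyr => funext fun i => hA i (hpy i) (hqy i) (hyr i)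

theorem dirProd_irrefl (hirrefl : ∀ v, ¬ A i v v) (x : ∀ i, V i) : ¬ dirProd A x x :=
  fun hx => hirrefl (x i) (hx i)

theorem IsECD.isIndepDominating_of_dirProd {S : Set (∀ i, V i)} (hS : IsECD (dirProd A) S)
    (hirrefl : ∀ v, ¬ A i v v) : IsIndepDominating (dirProd A) S :=
  ((isECD_iff_isIndepDominating (dirProd_irrefl hirrefl)).1 hS).1

theorem isSource_dirProd {x : ∀ i, V i} (hx : IsSource (A i) (x i)) : IsSource (dirProd A) x :=
  fun p hp => hx (p i) (hp i)

theorem dirProd_update [DecidableEq ι] {x y : ∀ i, V i} {p q : V i}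
    (hxy : ∀ l ≠ i, A l (x l) (y l)) (hpq : A i p q) :
    dirProd A (Function.update x i p) (Function.update y i q) := by
  intro l
  obtain rfl | hl := eq_or_ne l i
  · simpa using hpq
  · simpa [hl] using hxy l hl

theorem exists_dirProd_adj {x : ∀ i, V i} {c : V i} (hc : A i c (x i))
    (hother : ∀ l ≠ i, ∃ p, A l p (x l)) : ∃ w, w i = c ∧ dirProd A w x := by
  classical
  have hpred (l : ι) : ∃ p, l ≠ i → A l p (x l) := by
    by_cases hl : l = i
    · exact ⟨x l, fun h => absurd hl h⟩
    · exact (hother l hl).imp fun _ h _ => h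
  choose z hz using hpred
  refine ⟨Function.update z i c, by simp, ?_⟩
  simpa using dirProd_update hz hc

theorem fromSource_dirProd {n : ℕ} {x : ∀ i, V i} (hx : FromSource (A i) n (x i))
    (hother : ∀ l ≠ i, ¬ ∃ s, IsSource (A l) s) : FromSource (dirProd A) n x := by
  generalize hy : x i = y at hx
  induction hx generalizing x with
  | source hs => exact .source (isSource_dirProd (i := i) (hy ▸ hs))
  | arc _ hpy ih =>
    obtain ⟨w, hw, hwx⟩ := exists_dirProd_adj (hy ▸ hpy)
      fun l hl => exists_adj_of_no_source (hother l hl) (x l)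
    exact .arc (ih hw) hwx

theorem isECD_dirProd_preimage {T : Set (V i)} (hT : IsECD (A i) T) (hirrefl : ∀ v, ¬ A i v v)
    (hother : ∀ l ≠ i, ∀ y, ∃! p, A l p y) : IsECD (dirProd A) {x | x i ∈ T} := by
  obtain ⟨hdom, huniq⟩ := (isECD_iff_isIndepDominating hirrefl).1 hT
  refine (isECD_iff_isIndepDominating (dirProd_irrefl hirrefl)).2
    ⟨fun y => ⟨fun hy p hpy => (hdom (y i)).1 hy (p i) (hpy i), fun hy => ?_⟩,
      fun p q y hp hq hpy hqy => funext fun l => ?_⟩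
  · refine (hdom (y i)).2 fun c hc => ?_
    obtain ⟨w, rfl, hwy⟩ := exists_dirProd_adj hc fun l hl => (hother l hl (y l)).exists
    exact hy w hwy
  · obtain rfl | hl := eq_or_ne l i
    · exact huniq hp hq (hpy l) (hqy l)
    · exact (hother l hl (y l)).unique (hpy l) (hqy l)

theorem IsECD.eq_of_update_mem [DecidableEq ι] {S : Set (∀ i, V i)} (hS : IsECD (dirProd A) S)
    {x y : ∀ i, V i} (hxy : ∀ l ≠ i, A l (x l) (y l)) {p q s : V i} (hps : A i p s)
    (hqs : A i q s) (hp : Function.update x i p ∈ S) (hq : Function.update x i q ∈ S) : p = q :=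
  Function.update_injective x i <| (isECD_iff_existsUnique.1 hS (Function.update y i s)).unique
    ⟨hp, Or.inr (dirProd_update hxy hps)⟩ ⟨hq, Or.inr (dirProd_update hxy hqs)⟩

theorem IsECD.odd_or_odd_of_fromSource [∀ l, Nonempty (V l)] {S : Set (∀ i, V i)}
    (hS : IsECD (dirProd A) S) (hirrefl : ∀ v, ¬ A i v v) (hA : ∀ l, NonsinkInUnique (A l))
    (hother : ∀ l ≠ i, ¬ ∃ s, IsSource (A l) s) {p q s : V i} (hpq : p ≠ q) (hps : A i p s)
    (hqs : A i q s) {m n : ℕ} (hp : FromSource (A i) m p) (hq : FromSource (A i) n q) :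
    Odd m ∨ Odd n := by
  classical
  obtain ⟨y⟩ : Nonempty (∀ l, V l) := inferInstance
  have hdom := hS.isIndepDominating_of_dirProd hirrefl
  obtain ⟨x, -, hxy⟩ := exists_dirProd_adj (x := Function.update y i s) (by simpa using hps)
    fun l hl => exists_adj_of_no_source (hother l hl) _
  have hmem {c : V i} {r : ℕ} (hcs : A i c s) (hc : FromSource (A i) r c) (hr : Even r) :
      Function.update x i c ∈ S := by
    have hx : FromSource (dirProd A) r (Function.update x i c) :=
      fromSource_dirProd (by simpa using hc) hother
    exact (hdom.mem_iff_even (nonsinkInUnique_dirProd hA) hx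
      (dirProd_update (fun l _ => hxy l) hcs)).2 hr
  by_contra! hne
  simp only [Nat.not_odd_iff_even] at hne
  exact hpq <| hS.eq_of_update_mem (fun l _ => hxy l) hps hqs (hmem hps hp hne.1)
    (hmem hqs hq hne.2)

end DirProd

namespace IsOrientedCycle

variable {k : ℕ} {A : ZMod k → ZMod k → Prop}

theorem asymm (hA : IsOrientedCycle A) {x y : ZMod k} (hxy : A x y) : ¬ A y x := by
  obtain rfl | rfl := hA.1 x y hxy
  · exact ((hA.2 x).resolve_right fun h => h.2 hxy).2
  · exact ((hA.2 y).resolve_left fun h => h.2 hxy).2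

theorem irrefl (hA : IsOrientedCycle A) (x : ZMod k) : ¬ A x x :=
  fun h => hA.asymm h h

theorem adj_or_adj (hA : IsOrientedCycle A) (x : ZMod k) : A x (x + 1) ∨ A (x + 1) x :=
  (hA.2 x).imp And.left And.left

theorem swap (hA : IsOrientedCycle A) : IsOrientedCycle (Function.swap A) :=
  ⟨fun x y hyx => (hA.1 y x hyx).symm, fun i => (hA.2 i).symm⟩

theorem nonsinkInUnique (hA : IsOrientedCycle A) : NonsinkInUnique A := by
  intro p q y r hpy hqy hyr
  have hpr : p ≠ r := fun h => hA.asymm hpy (h ▸ hyr)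
  have hqr : q ≠ r := fun h => hA.asymm hqy (h ▸ hyr)
  grind [hA.1 p y hpy, hA.1 q y hqy, hA.1 y r hyr]

theorem eq_or_eq_or_eq_of_adj (hA : IsOrientedCycle A) {p q r y : ZMod k} (hp : A p y)
    (hq : A q y) (hr : A r y) : p = q ∨ p = r ∨ q = r := by
  grind [hA.1 p y hp, hA.1 q y hq, hA.1 r y hr]

theorem exists_adj_ne_of_isSink (hA : IsOrientedCycle A) (hk : 3 ≤ k) {s : ZMod k}
    (hs : IsSink A s) : ∃ p q, p ≠ q ∧ A p s ∧ A q s := by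
  refine ⟨s + 1, s - 1, fun h => ?_, (hA.adj_or_adj s).resolve_left (hs _), ?_⟩
  · have htwo : ((2 : ℕ) : ZMod k) = 0 := by
      push_cast
      linear_combination h
    have := Nat.le_of_dvd two_pos ((ZMod.natCast_eq_zero_iff 2 k).1 htwo)
    lia
  · have := hA.adj_or_adj (s - 1)
    rw [sub_add_cancel] at this
    exact this.resolve_right (hs _)

theorem exists_adj_isSource (hA : IsOrientedCycle A) :
    ∃ p q, A p q ∧ ((∃ s, IsSource A s) → IsSource A p) := by
  by_cases h : ∃ s, IsSource A s
  · obtain ⟨s, hs⟩ := h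
    exact ⟨s, s + 1, (hA.adj_or_adj s).resolve_right (hs _), fun _ => hs⟩
  · obtain ⟨p, hp⟩ := exists_adj_of_no_source h 0
    exact ⟨p, 0, hp, fun hs => absurd hs h⟩

theorem exists_forall_adj_add_of_chain [NeZero k] (hA : IsOrientedCycle A) {f : ℕ → ZMod k}
    (hf : ∀ n, A (f (n + 1)) (f n)) : ∃ e, ∀ y, A (y + e) y := by
  -- By asymmetry a backward walk never turns around, so it runs through the whole cycle.
  obtain ⟨e, hstep, hee⟩ : ∃ e, f 1 = f 0 + e ∧ e * e = 1 := by
    obtain h | h := hA.1 _ _ (hf 0)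
    · exact ⟨-1, by rw [h]; ring, by ring⟩
    · exact ⟨1, h, by ring⟩
  have hsucc (n : ℕ) : f (n + 1) = f n + e := by
    induction n with
    | zero => exact hstep
    | succ n ih =>
      have hback : f (n + 2) ≠ f n := fun h => hA.asymm (hf n) (h ▸ hf (n + 1))
      grind [hA.1 _ _ (hf n), hA.1 _ _ (hf (n + 1))]
  have hlinear (n : ℕ) : f n = f 0 + n * e := by
    induction n with
    | zero => simp
    | succ n ih => rw [hsucc, ih]; push_cast; ring
  refine ⟨e, fun y => ?_⟩
  obtain ⟨n, rfl⟩ : ∃ n, f n = y := by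
    refine ⟨((y - f 0) * e).val, ?_⟩
    rw [hlinear, ZMod.natCast_zmod_val]
    linear_combination (y - f 0) * hee
  exact hsucc n ▸ hf n

theorem exists_forall_adj_add_of_no_source [NeZero k] (hA : IsOrientedCycle A)
    (h : ¬ ∃ s, IsSource A s) : ∃ e, ∀ y, A (y + e) y := by
  choose pred hpred using exists_adj_of_no_source h
  refine hA.exists_forall_adj_add_of_chain (f := fun n => pred^[n] 0) fun n => ?_
  rw [Function.iterate_succ_apply']
  exact hpred _

theorem wellFounded [NeZero k] (hA : IsOrientedCycle A) (h : ∃ s, IsSource A s) :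
    WellFounded A := by
  obtain ⟨s, hs⟩ := h
  refine wellFounded_iff_isEmpty_descending_chain.2 ⟨fun ⟨f, hf⟩ => ?_⟩
  obtain ⟨e, he⟩ := hA.exists_forall_adj_add_of_chain hf
  exact hs _ (he s)

theorem exists_isSink [NeZero k] (hA : IsOrientedCycle A) (h : ∃ s, IsSource A s) :
    ∃ s, IsSink A s := by
  obtain ⟨s, hs⟩ := h
  by_contra hsink
  obtain ⟨e, he⟩ := hA.swap.exists_forall_adj_add_of_no_source hsink
  exact hs (s - e) (by simpa [Function.swap] using he (s - e))

theorem not_isSink_of_no_source [NeZero k] (hA : IsOrientedCycle A) (h : ¬ ∃ s, IsSource A s)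
    (y : ZMod k) : ¬ IsSink A y :=
  fun hy => h (hA.swap.exists_isSink ⟨y, hy⟩)

theorem existsUnique_adj_of_no_source [NeZero k] (hA : IsOrientedCycle A)
    (h : ¬ ∃ s, IsSource A s) (y : ZMod k) : ∃! p, A p y := by
  obtain ⟨r, hyr⟩ := not_forall_not.1 (hA.not_isSink_of_no_source h y)
  obtain ⟨p, hpy⟩ := exists_adj_of_no_source h y
  exact ⟨p, hpy, fun q hqy => hA.nonsinkInUnique hqy hpy hyr⟩

theorem isECDDigraph_of_even [NeZero k] (hA : IsOrientedCycle A) (h : ¬ ∃ s, IsSource A s)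
    (hk : Even k) : IsECDDigraph A := by
  let parity : ZMod k →+* ZMod 2 := ZMod.castHom hk.two_dvd (ZMod 2)
  have hparity {p y : ZMod k} (hpy : A p y) : parity p = 0 ↔ ¬ parity y = 0 := by
    have hsucc (b : ZMod 2) : b + 1 = 0 ↔ ¬ b = 0 := by revert b; decide
    obtain rfl | rfl := hA.1 _ _ hpy <;> simp [hsucc]
  refine ⟨{x | parity x = 0}, (isECD_iff_isIndepDominating hA.irrefl).2
    ⟨fun y => ?_, fun p q y _ _ hpy hqy => ?_⟩⟩
  · obtain ⟨p, hpy⟩ := exists_adj_of_no_source h y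
    exact ⟨fun hy q hqy hq => (hparity hqy).1 hq hy,
      fun hy => by_contra fun hy' => hy p hpy ((hparity hpy).2 hy')⟩
  · exact (hA.existsUnique_adj_of_no_source h y).unique hpy hqy

theorem isECDDigraph_of_hasNearSourceEvenDist [NeZero k] (hA : IsOrientedCycle A)
    (h : ∃ s, IsSource A s) (hs : ∀ s, IsSink A s → HasNearSourceEvenDist A s) :
    IsECDDigraph A := by
  obtain ⟨S, hS⟩ := exists_isIndepDominating_of_wellFounded (hA.wellFounded h)
  refine ⟨S, (isECD_iff_isIndepDominating hA.irrefl).2 ⟨hS, fun p q y hp hq hpy hqy => ?_⟩⟩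
  by_cases hy : IsSink A y
  · obtain ⟨n, r, hn, hr, hry⟩ := hasNearSourceEvenDist_iff.1 (hs y hy)
    have hrS : r ∉ S := by
      rwa [hS.mem_iff_even hA.nonsinkInUnique hr hry, Nat.not_even_iff_odd]
    obtain h | rfl | rfl := hA.eq_or_eq_or_eq_of_adj hpy hqy hry
    exacts [h, absurd hp hrS, absurd hq hrS]
  · obtain ⟨r, hyr⟩ := not_forall_not.1 hy
    exact hA.nonsinkInUnique hpy hqy hyr

end IsOrientedCycle

section ProductOfCycles

variable {ι : Type*} {k : ι → ℕ} {A : ∀ i, ZMod (k i) → ZMod (k i) → Prop}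

theorem isECDDigraph_dirProd_of_isECDDigraph [∀ i, NeZero (k i)] (hA : ∀ i, IsOrientedCycle (A i))
    {i : ι} (hi : IsECDDigraph (A i)) (hother : ∀ l ≠ i, ¬ ∃ s, IsSource (A l) s) :
    IsECDDigraph (dirProd A) := by
  obtain ⟨T, hT⟩ := hi
  exact ⟨_, isECD_dirProd_preimage hT (hA i).irrefl
    fun l hl => (hA l).existsUnique_adj_of_no_source (hother l hl)⟩

namespace IsECD

variable {S : Set (∀ i, ZMod (k i))}

theorem eq_of_exists_isSource (hS : IsECD (dirProd A) S) (hk : ∀ i, 3 ≤ k i)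
    (hA : ∀ i, IsOrientedCycle (A i)) {i j : ι} (hi : ∃ s, IsSource (A i) s)
    (hj : ∃ s, IsSource (A j) s) : i = j := by
  classical
  by_contra hij
  have (l : ι) : NeZero (k l) := ⟨by grind⟩
  have hdom := hS.isIndepDominating_of_dirProd (hA i).irrefl
  obtain ⟨s, hs⟩ := (hA j).exists_isSink hj
  obtain ⟨p, q, hpq, hps, hqs⟩ := (hA j).exists_adj_ne_of_isSink (hk j) hs
  choose x y hxy hx using fun l => (hA l).exists_adj_isSource
  have hmem (c : ZMod (k j)) : Function.update x j c ∈ S :=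
    hdom.mem_of_isSource (isSource_dirProd (i := i) (by simpa [hij] using hx i hi))
  exact hpq (hS.eq_of_update_mem (fun l _ => hxy l) hps hqs (hmem p) (hmem q))

theorem exists_even_of_no_source [Nonempty ι] [∀ i, NeZero (k i)] (hS : IsECD (dirProd A) S)
    (hfin : (Set.range k).Finite) (hA : ∀ i, IsOrientedCycle (A i))
    (h : ∀ i, ¬ ∃ s, IsSource (A i) s) : ∃ i, Even (k i) := by
  obtain ⟨i₀⟩ := ‹Nonempty ι›
  have hdom := hS.isIndepDominating_of_dirProd (hA i₀).irrefl
  choose e he using fun i => (hA i).exists_forall_adj_add_of_no_source (h i)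
  have hperiod : (∏ n ∈ hfin.toFinset, n) • e = 0 := by
    funext i
    have hdvd : k i ∣ ∏ n ∈ hfin.toFinset, n := Finset.dvd_prod_of_mem _ (by simp)
    simp [nsmul_eq_mul, (ZMod.natCast_eq_zero_iff _ _).2 hdvd]
  have heven := hdom.even_of_nsmul_eq_zero (nonsinkInUnique_dirProd fun i => (hA i).nonsinkInUnique)
    (fun x i => he i (x i)) hperiod
  obtain ⟨n, hn, h2n⟩ := (Nat.prime_two.prime.dvd_finsetProd_iff _).1 heven.two_dvd
  obtain ⟨i, rfl⟩ := hfin.mem_toFinset.1 hn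
  exact ⟨i, even_iff_two_dvd.2 h2n⟩

theorem hasNearSourceEvenDist (hS : IsECD (dirProd A) S) (hk : ∀ i, 3 ≤ k i)
    (hA : ∀ i, IsOrientedCycle (A i)) {i : ι} (hi : ∃ s, IsSource (A i) s) {s : ZMod (k i)}
    (hs : IsSink (A i) s) : HasNearSourceEvenDist (A i) s := by
  have (l : ι) : NeZero (k l) := ⟨by grind⟩
  have hother (l : ι) (hl : l ≠ i) : ¬ ∃ s, IsSource (A l) s :=
    fun h => hl (hS.eq_of_exists_isSource hk hA h hi)
  obtain ⟨p, q, hpq, hps, hqs⟩ := (hA i).exists_adj_ne_of_isSink (hk i) hs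
  obtain ⟨m, hp⟩ := exists_fromSource_of_wellFounded ((hA i).wellFounded hi) p
  obtain ⟨n, hq⟩ := exists_fromSource_of_wellFounded ((hA i).wellFounded hi) q
  obtain hm | hn := hS.odd_or_odd_of_fromSource (hA i).irrefl (fun l => (hA l).nonsinkInUnique)
    hother hpq hps hqs hp hq
  · exact hasNearSourceEvenDist_iff.2 ⟨m, p, hm, hp, hps⟩
  · exact hasNearSourceEvenDist_iff.2 ⟨n, q, hn, hq, hqs⟩

end IsECD

theorem dirprod_oriented_cycles_ecd_iff_general [Nonempty ι] (hfin : (Set.range k).Finite)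
    (hk : ∀ i, 3 ≤ k i) (hA : ∀ i, IsOrientedCycle (A i)) :
    IsECDDigraph (dirProd A) ↔
      ((∀ i j, (∃ s, IsSource (A i) s) → (∃ s, IsSource (A j) s) → i = j) ∧
       ((∀ i, ¬ ∃ s, IsSource (A i) s) → ∃ i, Even (k i)) ∧
       (∀ i, (∃ s, IsSource (A i) s) →
          ∀ s, IsSink (A i) s → HasNearSourceEvenDist (A i) s)) := by
  have (i : ι) : NeZero (k i) := ⟨by grind⟩
  constructor
  · rintro ⟨S, hS⟩
    exact ⟨fun i j hi hj => hS.eq_of_exists_isSource hk hA hi hj,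
      hS.exists_even_of_no_source hfin hA, fun i hi s hs => hS.hasNearSourceEvenDist hk hA hi hs⟩
  · rintro ⟨hunique, heven, hnear⟩
    by_cases hsource : ∃ i, ∃ s, IsSource (A i) s
    · obtain ⟨i, hi⟩ := hsource
      exact isECDDigraph_dirProd_of_isECDDigraph hA
        ((hA i).isECDDigraph_of_hasNearSourceEvenDist hi (hnear i hi))
        fun l hl h => hl (hunique l i h hi)
    · rw [not_exists] at hsource
      obtain ⟨i, hi⟩ := heven hsource
      exact isECDDigraph_dirProd_of_isECDDigraph hA ((hA i).isECDDigraph_of_even (hsource i) hi)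
        fun l _ => hsource l

end ProductOfCycles

/-- The direct product of oriented cycles `D₁ × ⋯ × D_t` is an ECD digraph iff at most one
factor has a source; if no factor has a source then some `k_i` is even; and if a factor has
a source then each of its sinks has a neighboring source at even distance. -/
theorem dirprod_oriented_cycles_ecd_iff (t : ℕ) (ht : 1 ≤ t) (k : Fin t → ℕ)
    (hk : ∀ i, 3 ≤ k i) (A : ∀ i, ZMod (k i) → ZMod (k i) → Prop)
    (hA : ∀ i, IsOrientedCycle (A i)) :
    IsECDDigraph (fun (x y : ∀ i, ZMod (k i)) => ∀ i, A i (x i) (y i)) ↔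
      ((∀ i j, (∃ s, IsSource (A i) s) → (∃ s, IsSource (A j) s) → i = j) ∧
       ((∀ i, ¬ ∃ s, IsSource (A i) s) → ∃ i, Even (k i)) ∧
       (∀ i, (∃ s, IsSource (A i) s) →
          ∀ s, IsSink (A i) s → HasNearSourceEvenDist (A i) s)) := by
  have : Nonempty (Fin t) := ⟨⟨0, ht⟩⟩
  exact dirprod_oriented_cycles_ecd_iff_general (Set.finite_range k) hk hA
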